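/- Let p ∈ (0,1] and let ξ ∼ Bernoulli(p). Then the smoothed estimator ḡ_T is a probability-p zero-chain: for every x ∈ ℝ^T, P_ξ( prog_0(ḡ_T(x,ξ)) = prog_{1/4}(x) + 1 ) ≤ p, and P_ξ( prog_0(ḡ_T(x,ξ)) > prog_{1/4}(x) + 1 ) = 0. -/

import Mathlib

open MeasureTheory

/-- The scalar function `Ψ` of the hard-instance construction. -/
noncomputable def Psi (t : ℝ) : ℝ :=
  if t ≤ 1 / 2 then 0 else Real.exp (1 - 1 / (2 * t - 1) ^ 2)

/-- The scalar function `Φ(t) = √e ∫_{−∞}^t e^{−τ²/2} dτ` of the hard-instance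
construction. -/
noncomputable def Phi (t : ℝ) : ℝ :=
  Real.sqrt (Real.exp 1) * ∫ τ in Set.Iic t, Real.exp (-τ ^ 2 / 2)

/-- The hard-instance chain function `F_T` on `ℝ^{T+1}` (so the paper's dimension `T ≥ 1`
is `T + 1` here; the paper's coordinate `xᵢ`, `1 ≤ i ≤ T`, is the zero-based coordinate
`x (i−1)`). -/
noncomputable def chainF (T : ℕ) (x : EuclideanSpace ℝ (Fin (T + 1))) : ℝ :=
  -Psi 1 * Phi (x 0) +
    ∑ i : Fin T,
      (Psi (-(x i.castSucc)) * Phi (-(x i.succ)) - Psi (x i.castSucc) * Phi (x i.succ))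

/-- `prog α x` is the largest one-based index `i ∈ {0, 1, …, n}` such that `|xᵢ| > α`
(with the paper's convention `x₀ ≡ 1`, so the value `0` is allowed and returned when no
coordinate exceeds `α`). -/
noncomputable def prog {n : ℕ} (α : ℝ) (x : EuclideanSpace ℝ (Fin n)) : ℕ :=
  (Finset.univ.filter fun i : Fin n => α < |x i|).sup fun i => (i : ℕ) + 1

/-- The bump function `Λ` supported on `(1/4, 1/2)`. -/
noncomputable def Lam (t : ℝ) : ℝ :=
  if 1 / 4 < t ∧ t < 1 / 2 then
    Real.exp (-1 / (100 * (t - 1 / 4) * (1 / 2 - t)))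
  else 0

/-- The integrated bump function `Γ(t) = (∫_{1/4}^t Λ) / (∫_{1/4}^{1/2} Λ)`. -/
noncomputable def Gam (t : ℝ) : ℝ :=
  (∫ τ in (1 / 4 : ℝ)..t, Lam τ) / ∫ τ in (1 / 4 : ℝ)..(1 / 2 : ℝ), Lam τ

/-- `Θ_i(x) = Γ(1 − ‖(Γ(|x_i|), …, Γ(|x_T|))‖₂)`. -/
noncomputable def Theta (T : ℕ) (x : EuclideanSpace ℝ (Fin (T + 1)))
    (i : Fin (T + 1)) : ℝ :=
  Gam (1 - Real.sqrt (∑ j ∈ Finset.univ.filter fun j : Fin (T + 1) => i ≤ j,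
    Gam |x j| ^ 2))

/-- The smoothed estimator `[ḡ_T(x,ξ)]ᵢ = ∂ᵢF_T(x)·(1 + Θᵢ(x)(ξ/p − 1))`, for
`ξ ∈ {0, 1} ⊆ ℝ`. -/
noncomputable def gbar (T : ℕ) (p : ℝ) (x : EuclideanSpace ℝ (Fin (T + 1)))
    (ξ : ℝ) : EuclideanSpace ℝ (Fin (T + 1)) :=
  WithLp.toLp 2 fun i => gradient (chainF T) x i * (1 + Theta T x i * (ξ / p - 1))

lemma Gam_zero_of_le {t : ℝ} (ht : t ≤ 1 / 4) : Gam t = 0 := by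
  unfold Gam
  have h : (∫ τ in (1 / 4 : ℝ)..t, Lam τ) = ∫ τ in (1 / 4 : ℝ)..t, (0 : ℝ) := by
    apply intervalIntegral.integral_congr
    intro s hs
    rw [Set.uIcc_of_ge ht] at hs
    have : ¬ (1 / 4 < s ∧ s < 1 / 2) := fun h => absurd h.1 (not_lt.mpr hs.2)
    simp only [Lam, if_neg this]
  rw [h]; simp

lemma Lam_measurable : Measurable Lam := by
  unfold Lam
  refine Measurable.ite ?_ (by fun_prop) measurable_const
  exact measurableSet_Ioo (a := (1 / 4 : ℝ)) (b := 1 / 2)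

lemma Lam_bound (t : ℝ) : ‖Lam t‖ ≤ 1 := by
  unfold Lam
  split_ifs with h
  · rw [Real.norm_eq_abs, abs_of_pos (Real.exp_pos _), Real.exp_le_one_iff]
    apply div_nonpos_of_nonpos_of_nonneg (by norm_num)
    have h1 : 0 < t - 1 / 4 := by linarith [h.1]
    have h2 : 0 < 1 / 2 - t := by linarith [h.2]
    positivity
  · simp

lemma Lam_ii (a b : ℝ) : IntervalIntegrable Lam volume a b := by
  refine (intervalIntegrable_const (c := (1 : ℝ))).mono_fun
    Lam_measurable.aestronglyMeasurable ?_
  filter_upwards with t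
  simpa using Lam_bound t

lemma Gam_one : Gam 1 = 1 := by
  unfold Gam
  have hpos : 0 < ∫ τ in (1 / 4 : ℝ)..(1 / 2 : ℝ), Lam τ := by
    apply intervalIntegral.intervalIntegral_pos_of_pos_on (Lam_ii _ _) _ (by norm_num)
    intro t ht
    have : 1 / 4 < t ∧ t < 1 / 2 := ht
    simp only [Lam, if_pos this]
    exact Real.exp_pos _
  have h0 : (∫ τ in (1 / 2 : ℝ)..1, Lam τ) = 0 := by
    have h : (∫ τ in (1 / 2 : ℝ)..1, Lam τ) = ∫ τ in (1 / 2 : ℝ)..1, (0 : ℝ) := by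
      apply intervalIntegral.integral_congr
      intro s hs
      rw [Set.uIcc_of_le (by norm_num)] at hs
      have : ¬ (1 / 4 < s ∧ s < 1 / 2) := fun h => absurd h.2 (not_lt.mpr hs.1)
      simp only [Lam, if_neg this]
    rw [h]; simp
  rw [← intervalIntegral.integral_add_adjacent_intervals (Lam_ii (1/4) (1/2)) (Lam_ii (1/2) 1),
    h0, add_zero, div_self hpos.ne']

lemma abs_le_of_prog_le {n : ℕ} {α : ℝ} {x : EuclideanSpace ℝ (Fin n)} {i : Fin n}
    (h : prog α x ≤ i) : |x i| ≤ α := by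
  by_contra hc
  have := Finset.le_sup (f := fun i : Fin n => (i : ℕ) + 1)
    (show i ∈ Finset.univ.filter fun i : Fin n => α < |x i| from
      Finset.mem_filter.mpr ⟨Finset.mem_univ i, not_le.mp hc⟩)
  simp only [prog] at h
  omega

lemma prog_zero_le {n : ℕ} {y : EuclideanSpace ℝ (Fin n)} {k : ℕ}
    (h : ∀ i : Fin n, k ≤ i → y i = 0) : prog 0 y ≤ k := by
  unfold prog
  refine Finset.sup_le fun i hi => ?_
  by_contra hc
  have := (Finset.mem_filter.mp hi).2
  rw [h i (by omega)] at this
  simp at this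

lemma Theta_one {T : ℕ} {x : EuclideanSpace ℝ (Fin (T + 1))} {i : Fin (T + 1)}
    (h : prog (1 / 4) x ≤ i) : Theta T x i = 1 := by
  unfold Theta
  rw [Finset.sum_eq_zero]
  · simp [Gam_one]
  · intro j hj
    have hij : i ≤ j := (Finset.mem_filter.mp hj).2
    rw [Gam_zero_of_le (abs_le_of_prog_le (h.trans hij))]
    simp

lemma Psi_zero {t : ℝ} (h : |t| ≤ 1 / 2) : Psi t = 0 ∧ Psi (-t) = 0 := by
  have := abs_le.mp h
  constructor
  · simp only [Psi]; rw [if_pos this.2]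
  · simp only [Psi]; rw [if_pos (by linarith [this.1])]

lemma chainF_const {T : ℕ} {x : EuclideanSpace ℝ (Fin (T + 1))} {i : Fin (T + 1)}
    (h : prog (1 / 4) x + 1 ≤ i) {t : ℝ} (ht : |t| < 1 / 4) :
    chainF T (x + t • EuclideanSpace.single i (1 : ℝ)) = chainF T x := by
  have hne : ∀ j, j ≠ i → (x + t • EuclideanSpace.single i (1 : ℝ)) j = x j := by
    intro j hj; simp [hj]
  have hi : (x + t • EuclideanSpace.single i (1 : ℝ)) i = x i + t := by simp
  have hxi : |x i| ≤ 1 / 4 := abs_le_of_prog_le (by omega)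
  generalize x + t • EuclideanSpace.single i (1 : ℝ) = y at hne hi
  unfold chainF
  have hi0 : (0 : Fin (T + 1)) ≠ i := by
    intro h0; rw [← h0] at h; simp at h
  rw [hne 0 hi0]
  congr 1
  refine Finset.sum_congr rfl fun j _ => ?_
  by_cases h1 : j.castSucc = i
  · have a1 := Psi_zero (t := x j.castSucc) (by rw [h1]; linarith)
    have a2 := Psi_zero (t := y j.castSucc) (by
      rw [h1, hi]; linarith [abs_add_le (x i) t])
    rw [a1.1, a1.2, a2.1, a2.2]; simp
  · rw [hne _ h1]
    by_cases h2 : j.succ = i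
    · have hj : prog (1 / 4) x ≤ (j.castSucc : ℕ) := by
        rw [← h2] at h; simp at h ⊢; omega
      have a1 := Psi_zero (t := x j.castSucc) (by
        linarith [abs_le_of_prog_le hj])
      rw [a1.1, a1.2]; simp
    · rw [hne _ h2]

lemma grad_zero {T : ℕ} {x : EuclideanSpace ℝ (Fin (T + 1))} {i : Fin (T + 1)}
    (h : prog (1 / 4) x + 1 ≤ i) : gradient (chainF T) x i = 0 := by
  by_cases hd : DifferentiableAt ℝ (chainF T) x
  · have e1 : gradient (chainF T) x i
        = fderiv ℝ (chainF T) x (EuclideanSpace.single i (1 : ℝ)) := by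
      have : inner ℝ (gradient (chainF T) x) (EuclideanSpace.single i (1 : ℝ))
          = fderiv ℝ (chainF T) x (EuclideanSpace.single i (1 : ℝ)) := by
        simp [gradient]
      rw [← this, EuclideanSpace.inner_single_right]
      simp
    rw [e1, ← hd.lineDeriv_eq_fderiv, lineDeriv]
    have : (fun t : ℝ => chainF T (x + t • EuclideanSpace.single i (1 : ℝ)))
        =ᶠ[nhds 0] fun _ => chainF T x := by
      filter_upwards [Metric.ball_mem_nhds (0 : ℝ) (by norm_num : (0 : ℝ) < 1 / 4)] with t ht
      exact chainF_const h (by simpa using ht)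
    rw [this.deriv_eq]; simp
  · rw [gradient_eq_zero_of_not_differentiableAt hd]; simp

/-- For `ξ ∼ Bernoulli(p)`, the smoothed estimator `ḡ_T` is a
probability-`p` zero-chain: the probability that `prog_0(ḡ_T(x,ξ)) = prog_{1/4}(x) + 1`
is at most `p`, and the probability that `prog_0(ḡ_T(x,ξ)) > prog_{1/4}(x) + 1` is `0`.
(Stated for dimension `T + 1`; the probability of an event is written out as
`p·𝟙{event at ξ=1} + (1−p)·𝟙{event at ξ=0}`.) -/
theorem gbar_probability_p_zero_chain
    (T : ℕ) (p : ℝ) (hp : p ∈ Set.Ioc (0 : ℝ) 1)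
    (x : EuclideanSpace ℝ (Fin (T + 1))) :
    ((if prog 0 (gbar T p x 1) = prog (1 / 4) x + 1 then p else 0)
        + (if prog 0 (gbar T p x 0) = prog (1 / 4) x + 1 then 1 - p else 0) ≤ p)
      ∧ ((if prog (1 / 4) x + 1 < prog 0 (gbar T p x 1) then p else 0)
        + (if prog (1 / 4) x + 1 < prog 0 (gbar T p x 0) then 1 - p else 0) = 0) := by
  have h0 : prog 0 (gbar T p x 0) ≤ prog (1 / 4) x := by
    refine prog_zero_le fun i hi => ?_
    simp [gbar, Theta_one hi]
  have h1 : prog 0 (gbar T p x 1) ≤ prog (1 / 4) x + 1 := by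
    refine prog_zero_le fun i hi => ?_
    simp [gbar, grad_zero hi]
  constructor
  · rw [if_neg (by omega : ¬ prog 0 (gbar T p x 0) = prog (1 / 4) x + 1)]
    have := hp.1
    split_ifs <;> linarith
  · rw [if_neg (by omega), if_neg (by omega)]; simp
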